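/- Let B(q) be the 7×7 matrix over ℚ(q) with diagonal entries [2]_q, entries −1 in the symmetric positions corresponding to the edges {1,3}, {3,4}, {4,5}, {5,6}, {6,7}, {2,4} of the E_7 Dynkin diagram (Bourbaki labelling), and 0 otherwise (the symmetrized q-Cartan matrix of type E_7). Then B(q) is invertible and every entry of the matrix [18]_q · B(q)^{−1} lies in ℕ[q,q^{−1}]. -/

import Mathlib

/-!
Write `B = (q + q⁻¹) I - A` with `A` the adjacency matrix of the `E_7` diagram, and let `c 0 = 0`,
`c 1 = I`, `c (u + 2) = A c (u + 1) - c u` be the Chebyshev polynomials of `A`. Since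
`(q - A + q⁻¹) ∑ u, c u q ^ u` telescopes, a partial sum satisfies
`B ∑_{u ≤ n} q ^ u c u = I + q ^ (n + 1) c n - q ^ n c (n + 1)` (`cartan_mul_partialSum`).

The Coxeter number of `E_7` is `18` and `-1` lies in its Weyl group, so `c 17 = I` and `c 18 = 0`;
moreover `c u ≥ 0` for all `u < 18` (`chebE7_seventeen`, `chebE7_eighteen`, `chebE7_toNat`,
all finite integer computations). Hence `B⁻¹ = (1 + q ^ 18)⁻¹ ∑_{u < 18} q ^ u c u`. Finally
`[18]_q = [9]_q q ^ (-9) (1 + q ^ 18)`, so the denominator cancels and every entry of `[18]_q B⁻¹`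
is the product of `[9]_q q ^ (-9)` with a polynomial with nonnegative integer coefficients.
-/

set_option synthInstance.maxHeartbeats 1000000

/-- The variable `q`, as an element of the field `ℚ(q)` of rational functions. -/
noncomputable def qq : RatFunc ℚ := RatFunc.X

/-- The quantum number `[m]_q = (q^m − q^{−m})/(q − q^{−1}) = Σ_{i=0}^{m−1} q^{m−1−2i}`. -/
noncomputable def qNum (m : ℕ) : RatFunc ℚ :=
  ∑ i ∈ Finset.range m, qq ^ ((m : ℤ) - 1 - 2 * (i : ℤ))

/-- An element of `ℚ(q)` lies in `ℕ[q,q^{−1}]` if it is a Laurent polynomial in `q`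
with nonnegative integer coefficients. -/
def IsNatLaurent (f : RatFunc ℚ) : Prop :=
  ∃ c : ℤ →₀ ℕ, f = c.sum fun k n => (n : RatFunc ℚ) * qq ^ k

/-- The adjacency matrix of the `E_7` Dynkin diagram in Bourbaki labelling. -/
def adjE7 : Matrix (Fin 7) (Fin 7) ℤ :=
  !![0, 0, 1, 0, 0, 0, 0;
     0, 0, 0, 1, 0, 0, 0;
     1, 0, 0, 1, 0, 0, 0;
     0, 1, 1, 0, 1, 0, 0;
     0, 0, 0, 1, 0, 1, 0;
     0, 0, 0, 0, 1, 0, 1;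
     0, 0, 0, 0, 0, 1, 0]

/-- The matrices `U_{u-1}(A)`, where `A` is the adjacency matrix of `E_7` and `U` denotes the
Chebyshev polynomials of the second kind normalised by `U_{-1} = 0`, `U_0 = 1`,
`U_{k+1} = x U_k - U_{k-1}`. -/
def chebE7 : ℕ → Matrix (Fin 7) (Fin 7) ℤ
  | 0 => 0
  | 1 => 1
  | u + 2 => adjE7 * chebE7 (u + 1) - chebE7 u

theorem chebE7_seventeen : chebE7 17 = 1 := by decide +kernel

theorem chebE7_eighteen : chebE7 18 = 0 := by decide +kernel

/-- The entries of `chebE7 u` are nonnegative for `u < 18`, phrased as a matrix identity. -/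
theorem chebE7_toNat : ∀ u : Fin 18, (chebE7 u).map (fun x => (x.toNat : ℤ)) = chebE7 u := by
  decide +kernel

theorem qq_ne_zero : qq ≠ 0 := RatFunc.X_ne_zero

theorem one_add_qq_pow_ne_zero : (1 + qq ^ 18 : RatFunc ℚ) ≠ 0 := by
  have h : (1 + qq ^ 18 : RatFunc ℚ)
      = algebraMap (Polynomial ℚ) (RatFunc ℚ) (1 + Polynomial.X ^ 18) := by
    simp [qq]
  rw [h]
  refine RatFunc.algebraMap_ne_zero fun h0 => ?_
  have := congrArg (Polynomial.eval 1) h0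
  norm_num at this

/-- An integer matrix viewed as a matrix over `ℚ(q)`. -/
noncomputable def toRat (M : Matrix (Fin 7) (Fin 7) ℤ) : Matrix (Fin 7) (Fin 7) (RatFunc ℚ) :=
  (Int.castRingHom (RatFunc ℚ)).mapMatrix M

theorem toRat_chebE7_succ (u : ℕ) :
    toRat (chebE7 (u + 2)) = toRat adjE7 * toRat (chebE7 (u + 1)) - toRat (chebE7 u) := by
  rw [chebE7, toRat, map_sub, map_mul]
  rfl

theorem cartan_mul_partialSum (n : ℕ) :
    ((qq + qq⁻¹) • 1 - toRat adjE7) * ∑ u ∈ Finset.range (n + 1), qq ^ u • toRat (chebE7 u)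
      = 1 + qq ^ (n + 1) • toRat (chebE7 n) - qq ^ n • toRat (chebE7 (n + 1)) := by
  induction n with
  | zero => simp [toRat, chebE7]
  | succ n ih =>
    rw [Finset.sum_range_succ, mul_add, ih, toRat_chebE7_succ, sub_mul, smul_mul_assoc, one_mul,
      mul_smul_comm, smul_smul, smul_sub]
    have h : (qq + qq⁻¹) * qq ^ (n + 1) = qq ^ (n + 2) + qq ^ n := by
      field_simp [qq_ne_zero]
      ring
    rw [h, add_smul]
    abel

theorem qNum_two : qNum 2 = qq + qq⁻¹ := by
  simp [qNum, Finset.sum_range_succ]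

theorem qNum_eighteen : qNum 18 = qNum 9 * qq ^ (-9 : ℤ) * (1 + qq ^ 18) := by
  have h : ∀ k : ℤ, qq ^ (k - 9) * qq ^ 18 = qq ^ (k + 9) := fun k => by
    rw [← zpow_natCast, ← zpow_add₀ qq_ne_zero]
    congr 1
    push_cast
    ring
  rw [mul_add, mul_one, qNum, qNum, Finset.sum_mul, Finset.sum_mul,
    show (18 : ℕ) = 9 + 9 from rfl, Finset.sum_range_add, add_comm]
  congr 1 <;> refine Finset.sum_congr rfl fun i _ => ?_
  · rw [← zpow_add₀ qq_ne_zero]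
    congr 1
    push_cast
    ring
  · rw [← zpow_add₀ qq_ne_zero, ← sub_eq_add_neg, h]
    congr 1
    push_cast
    ring

theorem IsNatLaurent.sum {ι : Type*} (s : Finset ι) (f : ι → RatFunc ℚ)
    (h : ∀ i ∈ s, IsNatLaurent (f i)) : IsNatLaurent (∑ i ∈ s, f i) := by
  classical
  refine Finset.sum_induction f IsNatLaurent ?_ ⟨0, by simp⟩ h
  rintro _ _ ⟨c, rfl⟩ ⟨d, rfl⟩
  refine ⟨c + d, (Finsupp.sum_add_index' ?_ ?_).symm⟩
  · simp
  · intro k m n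
    push_cast
    ring

theorem IsNatLaurent.monomial (n : ℕ) (k : ℤ) : IsNatLaurent ((n : RatFunc ℚ) * qq ^ k) :=
  ⟨Finsupp.single k n, by simp⟩

/-- The symmetrized `q`-Cartan matrix of type `E_7` (Bourbaki labelling, edges
`{1,3}, {3,4}, {4,5}, {5,6}, {6,7}, {2,4}`) is invertible, and every entry of
`[18]_q · B(q)⁻¹` lies in `ℕ[q,q⁻¹]`. -/
theorem typeE7_qCartan_inverse
    (B : Matrix (Fin 7) (Fin 7) (RatFunc ℚ))
    (hB : B = !![qNum 2, 0, -1, 0, 0, 0, 0;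
                 0, qNum 2, 0, -1, 0, 0, 0;
                 -1, 0, qNum 2, -1, 0, 0, 0;
                 0, -1, -1, qNum 2, -1, 0, 0;
                 0, 0, 0, -1, qNum 2, -1, 0;
                 0, 0, 0, 0, -1, qNum 2, -1;
                 0, 0, 0, 0, 0, -1, qNum 2]) :
    IsUnit B ∧ ∀ i j : Fin 7, IsNatLaurent (qNum 18 * B⁻¹ i j) := by
  have hB' : B = (qq + qq⁻¹) • 1 - toRat adjE7 := by
    rw [hB, qNum_two]
    ext i j
    fin_cases i <;> fin_cases j <;> simp [toRat, adjE7]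
  set S := ∑ u ∈ Finset.range 18, qq ^ u • toRat (chebE7 u) with hS
  have hBS : B * S = (1 + qq ^ 18) • 1 := by
    rw [hB', hS, cartan_mul_partialSum 17, chebE7_seventeen, chebE7_eighteen]
    simp [toRat, add_smul]
  have hinv : B * ((1 + qq ^ 18)⁻¹ • S) = 1 := by
    rw [mul_smul_comm, hBS, smul_smul, inv_mul_cancel₀ one_add_qq_pow_ne_zero, one_smul]
  refine ⟨IsUnit.of_mul_eq_one _ hinv, fun i j => ?_⟩
  have hentry : qNum 18 * B⁻¹ i j = ∑ k ∈ Finset.range 9, ∑ u ∈ Finset.range 18,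
      ((chebE7 u i j).toNat : RatFunc ℚ) * qq ^ ((9 : ℕ) - 1 - 2 * (k : ℤ) + -9 + (u : ℤ)) := by
    rw [Matrix.inv_eq_right_inv hinv, Matrix.smul_apply, smul_eq_mul, qNum_eighteen, mul_assoc,
      mul_inv_cancel_left₀ one_add_qq_pow_ne_zero, hS, Matrix.sum_apply, qNum, Finset.sum_mul,
      Finset.sum_mul]
    refine Finset.sum_congr rfl fun k _ => ?_
    rw [Finset.mul_sum]
    refine Finset.sum_congr rfl fun u hu => ?_
    have hc : ((chebE7 u i j).toNat : RatFunc ℚ) = ((chebE7 u i j : ℤ) : RatFunc ℚ) := by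
      have h := congrFun₂ (chebE7_toNat ⟨u, Finset.mem_range.mp hu⟩) i j
      rw [Matrix.map_apply] at h
      rw [← Int.cast_natCast, h]
    rw [hc, zpow_add₀ qq_ne_zero, zpow_add₀ qq_ne_zero, zpow_natCast]
    simp only [toRat, Matrix.smul_apply, RingHom.mapMatrix_apply, Matrix.map_apply, smul_eq_mul,
      eq_intCast]
    ring
  rw [hentry]
  exact IsNatLaurent.sum _ _ fun k _ => IsNatLaurent.sum _ _ fun u _ => IsNatLaurent.monomial _ _
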